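/- Existence of discrete, faithful, irreducible, rational representations of surface groups in SL(n): for every n ≥ 2 and every g ≥ 2, there exists an injective group homomorphism ρ from the genus-g surface group Σ_g to SL(n,ℝ) such that every matrix entry of every element of the image of ρ is rational (lies in the range of the coercion ℚ → ℝ), the image of ρ is a discrete subgroup of SL(n,ℝ), and the image of ρ acts irreducibly on ℝⁿ (the only ℝ-subspaces of (Fin n → ℝ) invariant under every matrix in the image are 0 and ℝⁿ). -/

import Mathlib

/-- `SL(n,R)` carries the subspace topology induced from the space of matrices. -/
instance specialLinearGroupTopology (n : Type*) [DecidableEq n] [Fintype n]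
    (R : Type*) [CommRing R] [TopologicalSpace R] :
    TopologicalSpace (Matrix.SpecialLinearGroup n R) :=
  TopologicalSpace.induced ((↑) : Matrix.SpecialLinearGroup n R → Matrix n n R) inferInstance

/-- The surface relator `[a₁,b₁] ⋯ [a_g,b_g]` in the free group on `a₁,b₁,…,a_g,b_g`. -/
def surfaceRelator (g : ℕ) : FreeGroup (Fin g ⊕ Fin g) :=
  (List.ofFn fun i : Fin g =>
    FreeGroup.of (Sum.inl i) * FreeGroup.of (Sum.inr i) *
      (FreeGroup.of (Sum.inl i))⁻¹ * (FreeGroup.of (Sum.inr i))⁻¹).prod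

/-- The genus-`g` surface group `Σ_g = ⟨a₁,b₁,…,a_g,b_g ∣ [a₁,b₁]⋯[a_g,b_g]⟩`. -/
abbrev SurfaceGroup (g : ℕ) : Type :=
  PresentedGroup ({surfaceRelator g} : Set (FreeGroup (Fin g ⊕ Fin g)))

/-!
Let `F` be the free group on two letters. Rational matrices realise `F` in `SL(2, ℚ)` as the
holonomy of a one-holed torus: the letters pair the sides of the ideal quadrilateral with vertices
`2, 3, 4, ∞`, and the commutator, which represents the boundary of the torus, becomes
`diag(-4, -1/4)`, with axis `Re z = 0`. The half-turn about `i` preserves this axis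
and reverses its direction, so gluing the torus to its image under the half-turn yields a
representation of `Σ₂ = F *_ℤ F` whose entries are still rational. Ping-pong, for the letters of
`F` and then for the amalgam, shows that every nontrivial element of `Σ₂` moves a base point of
the upper half-plane out of a fixed neighbourhood. Since `Σ_g` is the group of a cyclic cover of
the genus-two surface, it inherits such a representation.

Composing with the `d`-th symmetric power of `SL(2)` keeps the entries rational. If the symmetric
power of a matrix is close to `1`, then the matrix is close to `±1` and hence almost fixes the base
point, so only the identity of `Σ_g` is mapped close to `1`; this gives both faithfulness and
discreteness. Irreducibility follows because the symmetric power of `diag(-4, -1/4)` is diagonal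
with distinct eigenvalues, while that of another element of the image has no zero entry in its last
row and column.
-/

open Filter Topology UpperHalfPlane
open scoped MatrixGroups commutatorElement Pointwise

section SymPow

open Polynomial Matrix

variable {R : Type*} [CommRing R]

theorem aeval_homogenize_eq_sum (p : R[X]) (d : ℕ) (s t : R[X]) :
    MvPolynomial.aeval ![s, t] (p.homogenize d) =
      ∑ j : Fin (d + 1), C (p.coeff j) * (s ^ (j : ℕ) * t ^ (d - j)) := by
  rw [homogenize, map_sum, Finset.Nat.sum_antidiagonal_eq_sum_range_succ_mk, Finset.sum_range]
  refine Finset.sum_congr rfl fun j _ => ?_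
  rw [MvPolynomial.aeval_monomial, Finsupp.prod_fintype _ _ (by simp)]
  simp [Fin.prod_univ_two, Polynomial.algebraMap_eq]

theorem homogenize_pow (p : R[X]) {k : ℕ} (hp : p.natDegree ≤ k) (i : ℕ) :
    (p ^ i).homogenize (i * k) = p.homogenize k ^ i := by
  simpa using homogenize_finsetProd (s := Finset.range i) (p := fun _ => p) fun _ _ => hp

/-- The `d`-th symmetric power of a `2 × 2` matrix, in the basis `Xⁱ Y^(d - i)` of binary forms of
degree `d`. Row `i` lists the coefficients of the image of `Xⁱ Y^(d - i)` under the substitution of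
the rows of `M` for `X` and `Y`, dehomogenized at `Y = 1`. -/
noncomputable def symPow (d : ℕ) (M : Matrix (Fin 2) (Fin 2) R) :
    Matrix (Fin (d + 1)) (Fin (d + 1)) R :=
  .of fun i j => ((C (M 0 0) * X + C (M 0 1)) ^ (i : ℕ) *
    (C (M 1 0) * X + C (M 1 1)) ^ (d - i)).coeff j

theorem symPow_apply (d : ℕ) (M : Matrix (Fin 2) (Fin 2) R) (i j : Fin (d + 1)) :
    symPow d M i j = ((C (M 0 0) * X + C (M 0 1)) ^ (i : ℕ) *
      (C (M 1 0) * X + C (M 1 1)) ^ (d - i)).coeff j := rfl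

theorem homogenize_linear_pow_mul_linear_pow (a b c e : R) {d i : ℕ} (hi : i ≤ d) :
    ((C a * X + C b) ^ i * (C c * X + C e) ^ (d - i)).homogenize d =
      (.C a * .X 0 + .C b * .X 1) ^ i * (.C c * .X 0 + .C e * .X 1) ^ (d - i) := by
  obtain ⟨k, rfl⟩ := Nat.exists_eq_add_of_le hi
  have hpow (x y : R) (m : ℕ) : ((C x * X + C y) ^ m).homogenize m =
      (.C x * .X 0 + .C y * .X 1) ^ m := by
    simpa using homogenize_pow (C x * X + C y) natDegree_linear_le m
  rw [Nat.add_sub_cancel_left, homogenize_mul _ _ ?_ ?_, hpow, hpow] <;>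
  simpa using natDegree_pow_le_of_le _ natDegree_linear_le

theorem symPow_mul (d : ℕ) (M N : Matrix (Fin 2) (Fin 2) R) :
    symPow d (M * N) = symPow d M * symPow d N := by
  have hlin (i : Fin 2) : C ((M * N) i 0) * X + C ((M * N) i 1) =
      C (M i 0) * (C (N 0 0) * X + C (N 0 1)) + C (M i 1) * (C (N 1 0) * X + C (N 1 1)) := by
    simp only [mul_apply, Fin.sum_univ_two, C_add, C_mul]
    ring
  ext i k
  rw [symPow_apply, hlin, hlin, mul_apply]
  have := congr_arg (coeff · k) <| aeval_homogenize_eq_sum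
    ((C (M 0 0) * X + C (M 0 1)) ^ (i : ℕ) * (C (M 1 0) * X + C (M 1 1)) ^ (d - i)) d
    (C (N 0 0) * X + C (N 0 1)) (C (N 1 0) * X + C (N 1 1))
  rw [homogenize_linear_pow_mul_linear_pow _ _ _ _ i.is_le] at this
  simpa [symPow_apply, Polynomial.algebraMap_eq, finsetSum_coeff] using this

theorem symPow_diagonal (d : ℕ) (x y : R) :
    symPow d (diagonal ![x, y]) =
      diagonal fun i : Fin (d + 1) => x ^ (i : ℕ) * y ^ (d - i : ℕ) := by
  ext i j
  have hpoly : (C x * X + C 0) ^ (i : ℕ) * (C 0 * X + C y) ^ (d - i : ℕ) =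
      C (x ^ (i : ℕ) * y ^ (d - i : ℕ)) * X ^ (i : ℕ) := by
    simp only [C_mul, C_pow, C_0]
    ring
  refine (congr_arg (coeff · (j : ℕ)) hpoly).trans ?_
  simp only [coeff_C_mul_X_pow, diagonal_apply, Fin.ext_iff, eq_comm]

theorem symPow_one (d : ℕ) : symPow d (1 : Matrix (Fin 2) (Fin 2) R) = 1 := by
  ext i j
  simp [symPow_apply, one_apply, coeff_X_pow, Fin.ext_iff, eq_comm]

theorem symPow_map {S : Type*} [CommRing S] (f : R →+* S) (d : ℕ) (M : Matrix (Fin 2) (Fin 2) R) :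
    symPow d (M.map f) = (symPow d M).map f := by
  ext i j
  simp [symPow_apply, ← Polynomial.coeff_map]

theorem symPow_apply_last (d : ℕ) (M : Matrix (Fin 2) (Fin 2) R) (i : Fin (d + 1)) :
    symPow d M i (Fin.last d) = M 0 0 ^ (i : ℕ) * M 1 0 ^ (d - i : ℕ) := by
  have hcoeff (a b : R) (m : ℕ) : ((C a * X + C b) ^ m).coeff m = a ^ m := by
    simpa using coeff_pow_of_natDegree_le (n := 1) (m := m) (p := C a * X + C b) natDegree_linear_le
  have hmul := coeff_mul_add_eq_of_natDegree_le (R := R)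
    (f := (C (M 0 0) * X + C (M 0 1)) ^ (i : ℕ)) (g := (C (M 1 0) * X + C (M 1 1)) ^ (d - i : ℕ))
    (by simpa using natDegree_pow_le_of_le i natDegree_linear_le)
    (by simpa using natDegree_pow_le_of_le (d - i) natDegree_linear_le)
  rwa [hcoeff, hcoeff, Nat.add_sub_cancel' i.is_le] at hmul

theorem symPow_apply_zero (d : ℕ) (M : Matrix (Fin 2) (Fin 2) R) (i : Fin (d + 1)) :
    symPow d M i 0 = M 0 1 ^ (i : ℕ) * M 1 1 ^ (d - i : ℕ) := by
  simp [symPow_apply, coeff_zero_eq_eval_zero]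

theorem symPow_last_apply (d : ℕ) (M : Matrix (Fin 2) (Fin 2) R) (j : Fin (d + 1)) :
    symPow d M (Fin.last d) j = M 0 0 ^ (j : ℕ) * M 0 1 ^ (d - j : ℕ) * d.choose j := by
  have hcomp : (C (M 0 0) * X + C (M 0 1)) ^ d = ((X + C (M 0 1)) ^ d).comp (C (M 0 0) * X) := by
    simp
  rw [symPow_apply, Fin.val_last, Nat.sub_self, pow_zero, mul_one, hcomp, comp_C_mul_X_coeff,
    coeff_X_add_C_pow]
  ring

end SymPow

section SymPowSL

open Matrix

variable {K : Type*} [Field K] [CharZero K]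

theorem monoidHom_specialLinearGroup_two_eq_one {A : Type*} [CommMonoid A] (f : SL(2, K) →* A) :
    f = 1 := by
  ext M
  have hM : M ∈ commutator SL(2, K) := by
    rw [SL2.commutator_eq_top (two_ne_zero (α := K)) (by norm_num)]
    trivial
  simpa [Units.ext_iff] using Abelianization.commutator_subset_ker f.toHomUnits hM

theorem det_symPow (d : ℕ) (M : SL(2, K)) : (symPow d M.1).det = 1 := by
  let σ : Matrix (Fin 2) (Fin 2) K →* Matrix (Fin (d + 1)) (Fin (d + 1)) K :=
    ⟨⟨symPow d, symPow_one d⟩, symPow_mul d⟩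
  have hf := monoidHom_specialLinearGroup_two_eq_one
    (detMonoidHom.comp (σ.comp SpecialLinearGroup.coeMonoidHom))
  simpa [σ] using DFunLike.congr_fun hf M

/-- The `d`-th symmetric power representation of `SL(2, K)`, with values in `SL(d + 1, K)`. -/
noncomputable def symPowSL (d : ℕ) : SL(2, K) →* SL(d + 1, K) where
  toFun M := ⟨symPow d M, det_symPow d M⟩
  map_one' := Subtype.ext (symPow_one d)
  map_mul' _ _ := Subtype.ext (symPow_mul d _ _)

theorem map_symPowSL {L : Type*} [Field L] [CharZero L] (f : K →+* L) (d : ℕ) (M : SL(2, K)) :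
    SpecialLinearGroup.map f (symPowSL d M) = symPowSL d (SpecialLinearGroup.map f M) :=
  Subtype.ext (symPow_map f d _).symm

end SymPowSL

section Irreducibility

open Matrix

variable {n K : Type*} [Fintype n] [DecidableEq n] [Field K]

theorem single_mem_of_diagonal_mulVec_mem {W : Submodule K (n → K)} {μ : n → K}
    (hμ : Function.Injective μ) (hW : ∀ w ∈ W, diagonal μ *ᵥ w ∈ W) {w : n → K} (hw : w ∈ W)
    {j : n} (hj : w j ≠ 0) : Pi.single j 1 ∈ W := by
  have hproj (s : Finset n) : (fun i => (∏ k ∈ s, (μ i - μ k)) * w i) ∈ W := by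
    induction s using Finset.induction_on with
    | empty => simpa using hw
    | insert k s hk ih =>
      convert W.sub_mem (hW _ ih) (W.smul_mem (μ k) ih) using 1
      ext i
      simp only [Pi.sub_apply, mulVec_diagonal, Pi.smul_apply, smul_eq_mul, Finset.prod_insert hk]
      ring
  let c := (∏ k ∈ Finset.univ.erase j, (μ j - μ k)) * w j
  have hc : c ≠ 0 := mul_ne_zero
    (Finset.prod_ne_zero_iff.2 fun k hk =>
      sub_ne_zero.2 (hμ.ne (Finset.ne_of_mem_erase hk).symm)) hj
  convert W.smul_mem c⁻¹ (hproj (Finset.univ.erase j)) using 1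
  ext i
  obtain rfl | hij := eq_or_ne i j
  · simpa using (inv_mul_cancel₀ hc).symm
  · have hzero : ∏ k ∈ Finset.univ.erase j, (μ i - μ k) = 0 :=
      Finset.prod_eq_zero (Finset.mem_erase.2 ⟨hij, Finset.mem_univ i⟩) (sub_self _)
    simp [hij, hzero]

theorem eq_bot_or_eq_top_of_diagonal_mulVec_mem {W : Submodule K (n → K)} {μ : n → K}
    (hμ : Function.Injective μ) (hD : ∀ w ∈ W, diagonal μ *ᵥ w ∈ W) {A : Matrix n n K}
    (hA : ∀ w ∈ W, A *ᵥ w ∈ W) {l : n} (hrow : ∀ j, A l j ≠ 0) (hcol : ∀ i, A i l ≠ 0) :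
    W = ⊥ ∨ W = ⊤ := by
  refine or_iff_not_imp_left.2 fun hbot => ?_
  obtain ⟨w, hw, hne⟩ := W.ne_bot_iff.1 hbot
  obtain ⟨j, hj⟩ := Function.ne_iff.1 hne
  have hsingle {v : n → K} (hv : v ∈ W) (i : n) (hi : v i ≠ 0) : Pi.single i 1 ∈ W :=
    single_mem_of_diagonal_mulVec_mem hμ hD hv hi
  have hl : Pi.single l 1 ∈ W := hsingle (hA _ (hsingle hw j hj)) l (by simpa using hrow j)
  have hbasis (i : n) : Pi.single i 1 ∈ W := hsingle (hA _ hl) i (by simpa using hcol i)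
  rw [eq_top_iff, ← (Pi.basisFun K n).span_eq, Submodule.span_le]
  rintro - ⟨i, rfl⟩
  simpa using hbasis i

theorem eq_bot_or_eq_top_of_symPow_mulVec_mem [CharZero K] (d : ℕ)
    {W : Submodule K (Fin (d + 1) → K)} {x y : K} (hy : y ≠ 0)
    (hxy : Function.Injective fun k : ℕ => (x / y) ^ k)
    (hD : ∀ w ∈ W, symPow d (diagonal ![x, y]) *ᵥ w ∈ W) {A : Matrix (Fin 2) (Fin 2) K}
    (hA : ∀ w ∈ W, symPow d A *ᵥ w ∈ W) (h₀₀ : A 0 0 ≠ 0) (h₀₁ : A 0 1 ≠ 0) (h₁₀ : A 1 0 ≠ 0) :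
    W = ⊥ ∨ W = ⊤ := by
  have hμ : Function.Injective fun i : Fin (d + 1) => x ^ (i : ℕ) * y ^ (d - i : ℕ) := by
    have (i : Fin (d + 1)) : x ^ (i : ℕ) * y ^ (d - i : ℕ) = y ^ d * (x / y) ^ (i : ℕ) := by
      rw [div_pow, ← pow_sub_mul_pow y i.is_le]
      field_simp
    intro i j hij
    simpa [this, hy, Fin.ext_iff, hxy.eq_iff] using hij
  rw [symPow_diagonal] at hD
  refine eq_bot_or_eq_top_of_diagonal_mulVec_mem hμ hD hA (l := Fin.last d) (fun j => ?_)
    fun i => ?_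
  · have := (Nat.choose_pos j.is_le).ne'
    simp [symPow_last_apply, *]
  · simp [symPow_apply_last, *]

end Irreducibility

section Discreteness

open Matrix

theorem tendsto_abs_of_tendsto_pow {ι : Type*} {l : Filter ι} {f : ι → ℝ} {y : ℝ} {d : ℕ}
    (hd : d ≠ 0) (h : Tendsto (fun i => f i ^ d) l (𝓝 (y ^ d))) :
    Tendsto (fun i => |f i|) l (𝓝 |y|) := by
  have hroot (x : ℝ) : |x ^ d| ^ (d⁻¹ : ℝ) = |x| := by
    rw [abs_pow, Real.pow_rpow_inv_natCast (abs_nonneg x) hd]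
  simpa only [hroot] using h.abs.rpow_const (p := (d : ℝ)⁻¹) (.inr (by positivity))

theorem tendsto_smul_of_tendsto_entries {ι : Type*} {l : Filter ι} {M : ι → SL(2, ℝ)}
    (h₀₁ : Tendsto (fun i => M i 0 1) l (𝓝 0)) (h₁₀ : Tendsto (fun i => M i 1 0) l (𝓝 0))
    (h₁₁ : Tendsto (fun i => |M i 1 1|) l (𝓝 1)) (z : ℍ) :
    Tendsto (fun i => M i • z) l (𝓝 z) := by
  have h₀₁₁₁ : Tendsto (fun i => M i 0 1 * M i 1 1) l (𝓝 0) :=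
    (tendsto_zero_iff_abs_tendsto_zero _).2 <| by
      simpa [Function.comp_def, abs_mul] using h₀₁.abs.mul h₁₁
  have h₁₀₁₁ : Tendsto (fun i => M i 1 0 * M i 1 1) l (𝓝 0) :=
    (tendsto_zero_iff_abs_tendsto_zero _).2 <| by
      simpa [Function.comp_def, abs_mul] using h₁₀.abs.mul h₁₁
  have h₀₀₁₁ : Tendsto (fun i => M i 0 0 * M i 1 1) l (𝓝 1) := by
    have hdet (i : ι) : M i 0 0 * M i 1 1 = 1 + M i 0 1 * M i 1 0 := by
      linear_combination (det_fin_two (M i).1).symm.trans (M i).det_coe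
    simpa [hdet] using (h₀₁.mul h₁₀).const_add 1
  have h₁₁₁₁ : Tendsto (fun i => M i 1 1 * M i 1 1) l (𝓝 1) := by simpa using h₁₁.mul h₁₁
  have hlim : Tendsto (fun i => ((M i 0 0 * M i 1 1 : ℝ) * (z : ℂ) + (M i 0 1 * M i 1 1 : ℝ)) /
      ((M i 1 0 * M i 1 1 : ℝ) * (z : ℂ) + (M i 1 1 * M i 1 1 : ℝ))) l (𝓝 z) := by
    simpa [Pi.div_def] using ((h₀₀₁₁.ofReal.mul_const (z : ℂ)).add h₀₁₁₁.ofReal).div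
      ((h₁₀₁₁.ofReal.mul_const (z : ℂ)).add h₁₁₁₁.ofReal) (by simp)
  refine isEmbedding_coe.tendsto_nhds_iff.2 (hlim.congr' ?_)
  filter_upwards [h₁₁.eventually_ne one_ne_zero] with i hi
  have hne : (M i 1 1 : ℂ) ≠ 0 := by simpa using hi
  rw [Function.comp_apply, coe_specialLinearGroup_apply, eq_comm, ← mul_div_mul_right _ _ hne]
  push_cast
  simp only [Algebra.algebraMap_self, RingHom.id_apply]
  congr 1 <;> ring

theorem tendsto_smul_comap_symPowSL {d : ℕ} (hd : d ≠ 0) (z : ℍ) :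
    Tendsto (fun M : SL(2, ℝ) => M • z) (comap (symPowSL d) (𝓝 1)) (𝓝 z) := by
  have hentry (i j : Fin (d + 1)) : Tendsto (fun M : SL(2, ℝ) => symPow d M.1 i j)
      (comap (symPowSL d) (𝓝 1)) (𝓝 ((1 : Matrix (Fin (d + 1)) (Fin (d + 1)) ℝ) i j)) :=
    ((continuous_induced_dom.matrix_elem i j).tendsto (1 : SL(d + 1, ℝ))).comp tendsto_comap
  have h₀₁ := tendsto_abs_of_tendsto_pow (y := 0) hd <| by
    simpa [symPow_apply_zero, hd, Fin.ext_iff] using hentry (Fin.last d) 0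
  have h₁₀ := tendsto_abs_of_tendsto_pow (y := 0) hd <| by
    simpa [symPow_apply_last, hd, Fin.ext_iff, eq_comm] using hentry 0 (Fin.last d)
  have h₁₁ := tendsto_abs_of_tendsto_pow (y := 1) hd <| by
    simpa [symPow_apply_zero] using hentry 0 0
  rw [abs_zero] at h₀₁ h₁₀
  rw [abs_one] at h₁₁
  exact tendsto_smul_of_tendsto_entries ((tendsto_zero_iff_abs_tendsto_zero _).2 h₀₁)
    ((tendsto_zero_iff_abs_tendsto_zero _).2 h₁₀) h₁₁ z

theorem injective_of_eventually_eq_one {Γ G : Type*} [Group Γ] [Group G] [TopologicalSpace G]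
    {ρ : Γ →* G} (h : ∀ᶠ γ in comap ρ (𝓝 1), γ = 1) : Function.Injective ρ :=
  (injective_iff_map_eq_one ρ).2 fun γ hγ =>
    (eventually_comap.1 h).self_of_nhds γ hγ

theorem discreteTopology_range_of_eventually_eq_one {Γ G : Type*} [Group Γ] [Group G]
    [TopologicalSpace G] [IsTopologicalGroup G] {ρ : Γ →* G}
    (h : ∀ᶠ γ in comap ρ (𝓝 1), γ = 1) : DiscreteTopology ρ.range := by
  refine discreteTopology_of_isOpen_singleton_one <| (isOpen_singleton_iff_nhds_eq_pure _).2 <|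
    le_antisymm (fun s hs => ?_) (pure_le_nhds _)
  rw [nhds_subtype]
  filter_upwards [(eventually_comap.1 h).comap Subtype.val]
  rintro ⟨_, γ, rfl⟩ hγ
  obtain rfl := hγ γ rfl
  have hone : (⟨ρ 1, 1, rfl⟩ : ρ.range) = 1 := Subtype.ext ρ.map_one
  exact hone ▸ hs

theorem eventually_eq_one_of_eventually_smul_eq {Γ : Type*} [Group Γ] {ρ : Γ →* SL(2, ℝ)} {d : ℕ}
    (hd : d ≠ 0) {z : ℍ} (hz : ∀ᶠ w in 𝓝 z, ∀ γ, ρ γ • z = w → γ = 1) :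
    ∀ᶠ γ in comap ((symPowSL d).comp ρ) (𝓝 1), γ = 1 := by
  have hρ : Tendsto ρ (comap ((symPowSL d).comp ρ) (𝓝 1)) (comap (symPowSL d) (𝓝 1)) := by
    rw [MonoidHom.coe_comp, ← comap_comap]
    exact tendsto_comap
  filter_upwards [((tendsto_smul_comap_symPowSL hd z).comp hρ).eventually hz] with γ hγ
  exact hγ γ rfl

end Discreteness

section FreeGroupPingPong

open FreeGroup (IsReduced isReduced_toWord isReduced_cons_cons
  toWord_eq_nil_iff mk_toWord)

variable {α G X : Type*} [Group G] [MulAction G X]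

/-- Ping-pong data for an action of a free group: disjoint sets `H s`, one for each letter `s`
(a generator with a sign), such that `s` maps the complement of `H s⁻¹` into `H s`. -/
structure IsPingPong (φ : FreeGroup α →* G) (H : α × Bool → Set X) : Prop where
  smul_mem : ∀ s, ∀ x ∉ H (s.1, !s.2), φ (FreeGroup.mk [s]) • x ∈ H s
  eq_of_mem : ∀ s t x, x ∈ H s → x ∈ H t → s = t

/-- A set `L` that is peripheral for ping-pong data and preserved by `C`: each `H t` contains a
translate `h t • L`, and undoing the letter `t` maps this translate to another one of the family.
In the main example `L` is the half-plane beyond a boundary geodesic of a hyperbolic surface. -/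
structure IsPeripheral (φ : FreeGroup α →* G) (H : α × Bool → Set X) (L : Set X)
    (C : Subgroup (FreeGroup α)) (h : α × Bool → FreeGroup α) : Prop where
  smul_mem : ∀ c ∈ C, ∀ x ∈ L, φ c • x ∈ L
  smul_mem_of_mem : ∀ t, ∀ x ∈ L, φ (h t) • x ∈ H t
  exists_mem : ∀ t, ∃ u, (h u)⁻¹ * ((FreeGroup.mk [t])⁻¹ * h t) ∈ C

variable {φ : FreeGroup α →* G} {H : α × Bool → Set X}

theorem map_mk_cons_smul (s : α × Bool) (l : List (α × Bool)) (x : X) :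
    φ (FreeGroup.mk (s :: l)) • x = φ (FreeGroup.mk [s]) • φ (FreeGroup.mk l) • x := by
  rw [← mul_smul, ← map_mul, FreeGroup.mul_mk, List.singleton_append]

theorem IsPingPong.mk_cons_smul_mem (hH : IsPingPong φ H) {s : α × Bool} {l : List (α × Bool)}
    (hl : IsReduced (s :: l)) {x : X} (hx : ∀ t ∈ (s :: l).getLast?, x ∉ H (t.1, !t.2)) :
    φ (FreeGroup.mk (s :: l)) • x ∈ H s := by
  induction l generalizing s with
  | nil => exact hH.smul_mem s x (hx s rfl)
  | cons t l ih =>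
    obtain ⟨hst, hl⟩ := isReduced_cons_cons.1 hl
    rw [map_mk_cons_smul]
    refine hH.smul_mem s _ fun hmem => ?_
    have hts := hH.eq_of_mem _ _ _ (ih hl (by simpa using hx)) hmem
    simp [hts] at hst

theorem IsPingPong.exists_smul_mem (hH : IsPingPong φ H) {w : FreeGroup α} (hw : w ≠ 1)
    {x : X} (hx : ∀ t, x ∉ H t) : ∃ t, φ w • x ∈ H t := by
  classical
  obtain ⟨s, l, hsl⟩ := List.exists_cons_of_ne_nil (mt toWord_eq_nil_iff.1 hw)
  have hred : IsReduced (s :: l) := hsl ▸ isReduced_toWord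
  refine ⟨s, ?_⟩
  simpa only [← hsl, mk_toWord] using hH.mk_cons_smul_mem hred fun t _ => hx _

theorem lift_mk_smul_mem {f : α → G} (hf : ∀ i, ∀ {x}, x ∉ H (i, false) → f i • x ∈ H (i, true))
    (s : α × Bool) (x : X) (hx : x ∉ H (s.1, !s.2)) :
    FreeGroup.lift f (FreeGroup.mk [s]) • x ∈ H s := by
  obtain ⟨i, _ | _⟩ := s
  · simpa using not_imp_comm.1 (hf i (x := (f i)⁻¹ • x)) (by simpa using hx)
  · simpa using hf i hx

namespace IsPeripheral

variable {L : Set X} {C : Subgroup (FreeGroup α)} {h : α × Bool → FreeGroup α}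

theorem exists_inv_mul_eq (hL : IsPeripheral φ H L C h) (t : α × Bool) :
    ∃ u, ∃ c ∈ C, (FreeGroup.mk [t])⁻¹ * h t = h u * c :=
  (hL.exists_mem t).imp fun u hu => ⟨_, hu, by group⟩

theorem smul_ne_smul (hH : IsPingPong φ H) (hL : IsPeripheral φ H L C h) {x : X}
    (hx : ∀ t, x ∉ H t) (w : FreeGroup α) (j : α × Bool) {y : X} (hy : y ∈ L) :
    φ w • x ≠ φ (h j) • y := by
  classical
  rw [← mk_toWord (x := w)]
  have hred : IsReduced w.toWord := isReduced_toWord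
  generalize w.toWord = l at *
  intro heq
  induction l generalizing j y with
  | nil =>
    refine hx j ?_
    simpa [← FreeGroup.one_eq_mk, ← heq] using hL.smul_mem_of_mem j y hy
  | cons s l ih =>
    obtain rfl : s = j := hH.eq_of_mem _ _ _ (hH.mk_cons_smul_mem hred fun t _ => hx _)
      (heq ▸ hL.smul_mem_of_mem j y hy)
    obtain ⟨u, c, hc, huc⟩ := hL.exists_inv_mul_eq s
    refine ih u (hL.smul_mem c hc y hy) hred.tail ?_
    rw [← mul_smul (φ (h u)), ← map_mul, ← huc, map_mul, mul_smul, ← heq, map_mk_cons_smul,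
      map_inv, inv_smul_smul]

theorem eq_of_mk_cons_smul_eq_smul (hH : IsPingPong φ H) (hL : IsPeripheral φ H L C h)
    {s i j : α × Bool} {l : List (α × Bool)} {x y : X} (hx : x ∈ L) (hy : y ∈ L)
    (hl : IsReduced (s :: l)) (hlast : (i.1, !i.2) ∉ (s :: l).getLast?)
    (hxy : φ (FreeGroup.mk (s :: l) * h i) • x = φ (h j) • y) : s = j := by
  refine hH.eq_of_mem _ _ _ ?_ (hL.smul_mem_of_mem j y hy)
  rw [← hxy, map_mul, mul_smul]
  refine hH.mk_cons_smul_mem hl fun t ht hmem => hlast ?_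
  obtain rfl := hH.eq_of_mem _ _ _ (hL.smul_mem_of_mem i x hx) hmem
  simpa using ht

theorem mem_of_smul_eq_smul (hH : IsPingPong φ H) (hL : IsPeripheral φ H L C h)
    {w : FreeGroup α} {i j : α × Bool} {x y : X} (hx : x ∈ L) (hy : y ∈ L)
    (hxy : φ (w * h i) • x = φ (h j) • y) : (h j)⁻¹ * (w * h i) ∈ C := by
  classical
  rw [← mk_toWord (x := w)] at hxy ⊢
  have hred : IsReduced w.toWord := isReduced_toWord
  generalize w.toWord = l at *
  induction hn : l.length generalizing l i j x y with
  | zero =>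
    obtain rfl := List.eq_nil_of_length_eq_zero hn
    rw [← FreeGroup.one_eq_mk, one_mul] at hxy ⊢
    obtain rfl := hH.eq_of_mem _ _ _ (hL.smul_mem_of_mem i x hx)
      (hxy ▸ hL.smul_mem_of_mem j y hy)
    simp
  | succ n ih =>
    by_cases hlast : (i.1, !i.2) ∈ l.getLast?
    · obtain ⟨l, rfl⟩ := List.getLast?_eq_some_iff.1 hlast
      obtain ⟨u, c, hc, huc⟩ := hL.exists_inv_mul_eq i
      have hmk : FreeGroup.mk (l ++ [(i.1, !i.2)]) * h i = FreeGroup.mk l * h u * c := by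
        rw [mul_assoc, ← huc, ← mul_assoc, FreeGroup.inv_mk, FreeGroup.mul_mk]
        rfl
      have hcx : φ (FreeGroup.mk l * h u) • φ c • x = φ (h j) • y := by
        rw [← mul_smul, ← map_mul, ← hmk, hxy]
      have hmem := ih (hL.smul_mem c hc x hx) hy l hcx (hred.infix (List.prefix_append l _).isInfix)
        (by simpa using hn)
      rw [hmk]
      simpa only [mul_assoc] using C.mul_mem hmem hc
    · obtain ⟨s, l, rfl⟩ := List.exists_cons_of_length_eq_add_one hn
      obtain rfl := eq_of_mk_cons_smul_eq_smul hH hL hx hy hred hlast hxy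
      obtain ⟨u, c, hc, huc⟩ := hL.exists_inv_mul_eq s
      have hmk : FreeGroup.mk (s :: l) = FreeGroup.mk [s] * FreeGroup.mk l := by
        rw [FreeGroup.mul_mk, List.singleton_append]
      have hcy : φ (FreeGroup.mk l * h i) • x = φ (h u) • φ c • y := by
        rw [← mul_smul, ← map_mul, ← huc, map_mul φ (FreeGroup.mk [s])⁻¹, mul_smul, ← hxy, hmk,
          mul_assoc, map_mul φ (FreeGroup.mk [s]), mul_smul, map_inv, inv_smul_smul]
      have hmem := ih hx (hL.smul_mem c hc y hy) l hcy hred.tail (by simpa using hn)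
      have hinv : (h s)⁻¹ * (FreeGroup.mk (s :: l) * h i) =
          c⁻¹ * ((h u)⁻¹ * (FreeGroup.mk l * h i)) := by
        rw [← mul_assoc c⁻¹, ← mul_inv_rev, ← huc, hmk]
        group
      exact hinv ▸ C.mul_mem (C.inv_mem hc) hmem

end IsPeripheral

end FreeGroupPingPong

section Amalgam

variable {S : Type*} [Group S] {A B : Subgroup S}

theorem exists_isChain_cons_prod_eq {s : S} (hs : s ∈ A ∨ s ∈ B) {l : List S}
    (hl : ∀ t ∈ l, t ∈ A ∨ t ∈ B)
    (hchain : l.IsChain fun s t => ¬(s ∈ A ∧ t ∈ A) ∧ ¬(s ∈ B ∧ t ∈ B)) :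
    ∃ l' : List S, (∀ t ∈ l', t ∈ A ∨ t ∈ B) ∧
      l'.IsChain (fun s t => ¬(s ∈ A ∧ t ∈ A) ∧ ¬(s ∈ B ∧ t ∈ B)) ∧ l'.prod = s * l.prod := by
  induction l generalizing s with
  | nil => exact ⟨[s], by simpa using hs, .singleton s, rfl⟩
  | cons t l ih =>
    have hl' : ∀ u ∈ l, u ∈ A ∨ u ∈ B := fun u hu => hl u (.tail _ hu)
    by_cases hA : s ∈ A ∧ t ∈ A
    · simpa [mul_assoc] using ih (.inl (mul_mem hA.1 hA.2)) hl' hchain.tail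
    by_cases hB : s ∈ B ∧ t ∈ B
    · simpa [mul_assoc] using ih (.inr (mul_mem hB.1 hB.2)) hl' hchain.tail
    exact ⟨s :: t :: l, List.forall_mem_cons.2 ⟨hs, hl⟩, .cons_cons ⟨hA, hB⟩ hchain, rfl⟩

theorem exists_isChain_prod_eq (htop : A ⊔ B = ⊤) (γ : S) :
    ∃ l : List S, (∀ t ∈ l, t ∈ A ∨ t ∈ B) ∧
      l.IsChain (fun s t => ¬(s ∈ A ∧ t ∈ A) ∧ ¬(s ∈ B ∧ t ∈ B)) ∧ l.prod = γ := by
  have hγ : γ ∈ Subgroup.closure ((A : Set S) ∪ B) := by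
    rw [Subgroup.closure_union, A.closure_eq, B.closure_eq, htop]
    trivial
  induction hγ using Subgroup.closure_induction_left with
  | one => exact ⟨[], by simp, .nil, rfl⟩
  | mul_left s hs γ _ ih =>
    obtain ⟨l, hl, hchain, rfl⟩ := ih
    exact exists_isChain_cons_prod_eq hs hl hchain
  | inv_mul_cancel s hs γ _ ih =>
    obtain ⟨l, hl, hchain, rfl⟩ := ih
    exact exists_isChain_cons_prod_eq (hs.imp A.inv_mem B.inv_mem) hl hchain

variable {X : Type*} [MulAction S X] {L T : Set X}

theorem prod_smul_mem_iff_of_isChain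
    (hA : ∀ s ∈ A, s ∉ B → ∀ x ∈ L, s • x ∉ L) (hB : ∀ s ∈ B, s ∉ A → ∀ x ∉ L, s • x ∈ L)
    {x : X} (hx : ∀ s ∈ A, s • x ∉ L) {l : List S} (hl : ∀ t ∈ l, t ∈ A ∨ t ∈ B)
    (hchain : l.IsChain fun s t => ¬(s ∈ A ∧ t ∈ A) ∧ ¬(s ∈ B ∧ t ∈ B)) :
    l.prod • x ∈ L ↔ ∃ s ∈ l.head?, s ∉ A := by
  induction l with
  | nil => simpa using hx 1 A.one_mem
  | cons s l ih =>
    obtain ⟨hs, hl⟩ := List.forall_mem_cons.1 hl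
    have ih := ih hl hchain.tail
    rw [List.prod_cons, mul_smul]
    suffices s • l.prod • x ∈ L ↔ s ∉ A by simpa
    cases l with
    | nil =>
      by_cases hsA : s ∈ A
      · simpa [hsA] using hx s hsA
      · simpa [hsA] using hB s (hs.resolve_left hsA) hsA x (by simpa using ih)
    | cons t l =>
      have hst := hchain.rel
      have ht := hl t (by simp)
      replace ih : (t :: l).prod • x ∈ L ↔ t ∉ A := by simpa using ih
      by_cases hsA : s ∈ A
      · simpa [hsA] using hA s hsA (by tauto) _ (ih.2 (by tauto))
      · simpa [hsA] using hB s (by tauto) hsA _ (mt ih.1 (by tauto))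

theorem mem_left_of_smul_mem_of_pingPong (htop : A ⊔ B = ⊤)
    (hA : ∀ s ∈ A, s ∉ B → ∀ x ∈ L, s • x ∉ L) (hB : ∀ s ∈ B, s ∉ A → ∀ x ∉ L, s • x ∈ L)
    (hT : ∀ s ∈ A, ∀ x ∈ T, s • x ∉ L) {γ : S} {x : X} (hx : x ∈ T) (hγx : γ • x ∈ T) :
    γ ∈ A := by
  obtain ⟨l, hl, hchain, rfl⟩ := exists_isChain_prod_eq htop γ
  have hmem {l : List S} := prod_smul_mem_iff_of_isChain hA hB (hT · · x hx) (l := l)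
  cases l with
  | nil => exact A.one_mem
  | cons s l =>
    have hs : s ∈ A := by_contra fun hs =>
      hT 1 A.one_mem _ hγx (by simpa using (hmem hl hchain).2 ⟨s, rfl, hs⟩)
    have hlx : l.prod • x ∉ L := by
      simpa [mul_smul] using hT s⁻¹ (A.inv_mem hs) _ hγx
    cases l with
    | nil => simpa using hs
    | cons t l =>
      have ht : t ∈ A := by_contra fun ht =>
        hlx ((hmem (List.forall_mem_cons.1 hl).2 hchain.tail).2 ⟨t, rfl, ht⟩)
      exact absurd ⟨hs, ht⟩ hchain.rel.1

end Amalgam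

section Geometry

/-- The region `α |z|² + β Re z + γ ≤ 0` of the upper half-plane, which is a hyperbolic half-plane
when `β² > 4 α γ`. -/
def geodesicHalfPlane (α β γ : ℝ) : Set ℍ :=
  {z | α * Complex.normSq z + β * z.re + γ ≤ 0}

theorem mem_geodesicHalfPlane {α β γ : ℝ} {z : ℍ} :
    z ∈ geodesicHalfPlane α β γ ↔ α * Complex.normSq z + β * z.re + γ ≤ 0 := Iff.rfl

theorem isClosed_geodesicHalfPlane (α β γ : ℝ) : IsClosed (geodesicHalfPlane α β γ) :=
  isClosed_le (by fun_prop) continuous_const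

theorem smul_mem_geodesicHalfPlane_iff {R : Type*} [CommRing R] [Algebra R ℝ] (g : SL(2, R))
    {a b c d : ℝ} (ha : algebraMap R ℝ (g 0 0) = a) (hb : algebraMap R ℝ (g 0 1) = b)
    (hc : algebraMap R ℝ (g 1 0) = c) (hd : algebraMap R ℝ (g 1 1) = d)
    (α β γ : ℝ) (z : ℍ) :
    g • z ∈ geodesicHalfPlane α β γ ↔
      z ∈ geodesicHalfPlane (α * a ^ 2 + β * a * c + γ * c ^ 2)
        (2 * α * a * b + β * (a * d + b * c) + 2 * γ * c * d)
        (α * b ^ 2 + β * b * d + γ * d ^ 2) := by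
  have hD : 0 < Complex.normSq (c * z + d) := by
    simpa [denom, hc, hd] using
      normSq_denom_pos (Matrix.SpecialLinearGroup.mapGL ℝ g) z.im_ne_zero
  have hcoe : ((g • z : ℍ) : ℂ) = (a * z + b) / (c * z + d) := by
    rw [coe_specialLinearGroup_apply, ha, hb, hc, hd]
  have hnormSq : Complex.normSq (g • z : ℍ) * Complex.normSq (c * z + d) =
      Complex.normSq (a * z + b) := by
    rw [hcoe, map_div₀, div_mul_cancel₀ _ hD.ne']
  have hre : (g • z).re * Complex.normSq (c * z + d) =
      (a * z + b : ℂ).re * (c * z + d : ℂ).re + (a * z + b : ℂ).im * (c * z + d : ℂ).im := by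
    rw [← coe_re, hcoe, Complex.div_re, ← add_div, div_mul_cancel₀ _ hD.ne']
  have hquad : (α * Complex.normSq (g • z : ℍ) + β * (g • z).re + γ) * Complex.normSq (c * z + d) =
      (α * a ^ 2 + β * a * c + γ * c ^ 2) * Complex.normSq z +
        (2 * α * a * b + β * (a * d + b * c) + 2 * γ * c * d) * z.re +
        (α * b ^ 2 + β * b * d + γ * d ^ 2) := by
    rw [add_mul, add_mul, mul_assoc, mul_assoc, hnormSq, hre]
    simp only [Complex.normSq_apply, Complex.add_re, Complex.mul_re, Complex.ofReal_re, coe_re,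
      Complex.ofReal_im, coe_im, zero_mul, sub_zero, Complex.add_im, Complex.mul_im, add_zero]
    ring
  rw [mem_geodesicHalfPlane, mem_geodesicHalfPlane, ← hquad]
  exact ⟨fun h => mul_nonpos_of_nonpos_of_nonneg h hD.le, (nonpos_of_mul_nonpos_left · hD)⟩

end Geometry

section HoledTorus

/-- The holonomies of the two generators `false` and `true` of the fundamental group of a one-holed
torus. They are chosen to pair the sides of the ideal quadrilateral with vertices `2, 3, 4, ∞` in
such a way that their commutator is diagonal. -/
def holedTorusMatrix : Bool → SL(2, ℚ)
  | false => ⟨!![-4, 10; -1/2, 1], by norm_num [Matrix.det_fin_two_of]⟩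
  | true => ⟨!![1, -5; 1, -4], by norm_num [Matrix.det_fin_two_of]⟩

/-- The holonomy representation of a one-holed torus with free fundamental group `⟨false, true⟩`. -/
def holedTorusRep : FreeGroup Bool →* SL(2, ℚ) := FreeGroup.lift holedTorusMatrix

/-- The half-planes beyond the sides of the ideal quadrilateral with vertices `2, 3, 4, ∞`, indexed
by the letter that maps the quadrilateral to its neighbour across that side. -/
def holedTorusSide : Bool × Bool → Set ℍ
  | (false, false) => geodesicHalfPlane 1 (-5) 6
  | (false, true) => geodesicHalfPlane 0 (-1) 4
  | (true, false) => geodesicHalfPlane 1 (-7) 12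
  | (true, true) => geodesicHalfPlane 0 1 (-2)

theorem normSq_sub_mul_re_add_sq_pos (z : ℍ) (c : ℝ) :
    0 < Complex.normSq z - 2 * c * z.re + c ^ 2 := by
  have := z.im_pos
  rw [Complex.normSq_apply, coe_re, coe_im]
  nlinarith [sq_nonneg (z.re - c)]

theorem isClosed_holedTorusSide (s : Bool × Bool) : IsClosed (holedTorusSide s) := by
  rcases s with ⟨_ | _, _ | _⟩ <;> exact isClosed_geodesicHalfPlane _ _ _

theorem holedTorusMatrix_smul_mem (i : Bool) {z : ℍ} (hz : z ∉ holedTorusSide (i, false)) :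
    holedTorusMatrix i • z ∈ holedTorusSide (i, true) := by
  cases i
  all_goals
    have hz := not_le.1 (mem_geodesicHalfPlane.not.1 hz)
    rw [holedTorusSide, smul_mem_geodesicHalfPlane_iff _ rfl rfl rfl rfl, mem_geodesicHalfPlane]
    norm_num [holedTorusMatrix]
    linarith

theorem isPingPong_holedTorusRep : IsPingPong holedTorusRep holedTorusSide where
  smul_mem := lift_mk_smul_mem @holedTorusMatrix_smul_mem
  eq_of_mem := by
    rintro ⟨_ | _, _ | _⟩ ⟨_ | _, _ | _⟩ x hs ht
    all_goals first | rfl | exfalso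
    all_goals
      simp only [holedTorusSide, mem_geodesicHalfPlane] at hs ht
      linarith [normSq_sub_mul_re_add_sq_pos x 2, normSq_sub_mul_re_add_sq_pos x 3,
        normSq_sub_mul_re_add_sq_pos x 4]

/-- The half-plane `Re z ≤ 0` beyond the geodesic that covers the boundary of the one-holed
torus. -/
def holedTorusBoundary : Set ℍ := geodesicHalfPlane 0 1 0

/-- The class of the boundary curve in the fundamental group of the one-holed torus. -/
def boundaryLoop : FreeGroup Bool := ⁅FreeGroup.of false, FreeGroup.of true⁆

/-- For each letter, an element that maps `holedTorusBoundary` into the side indexed by that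
letter. -/
def holedTorusTranslate : Bool × Bool → FreeGroup Bool
  | (false, false) => (FreeGroup.of false)⁻¹
  | (false, true) => (FreeGroup.of true)⁻¹
  | (true, false) => (FreeGroup.of false)⁻¹ * (FreeGroup.of true)⁻¹
  | (true, true) => 1

theorem holedTorusRep_boundaryLoop :
    (holedTorusRep boundaryLoop : Matrix (Fin 2) (Fin 2) ℚ) =
      Matrix.diagonal ![-4, -1 / 4] := by
  simp only [boundaryLoop, holedTorusRep, commutatorElement_def, map_mul, map_inv,
    FreeGroup.lift_apply_of, Matrix.SpecialLinearGroup.coe_mul, Matrix.SpecialLinearGroup.coe_inv,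
    Matrix.adjugate_fin_two]
  ext i j
  fin_cases i <;> fin_cases j <;> norm_num [holedTorusMatrix, Matrix.mul_apply]

theorem holedTorusRep_boundaryLoop_smul_mem_iff (z : ℍ) :
    holedTorusRep boundaryLoop • z ∈ holedTorusBoundary ↔ z ∈ holedTorusBoundary := by
  rw [holedTorusBoundary, smul_mem_geodesicHalfPlane_iff _ rfl rfl rfl rfl,
    holedTorusRep_boundaryLoop]
  norm_num [mem_geodesicHalfPlane]

theorem mem_holedTorusSide_of_true_smul_mem {z : ℍ}
    (hz : holedTorusMatrix true • z ∈ holedTorusBoundary) : z ∈ holedTorusSide (false, true) := by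
  rw [holedTorusBoundary, smul_mem_geodesicHalfPlane_iff _ rfl rfl rfl rfl,
    mem_geodesicHalfPlane] at hz
  rw [holedTorusSide, mem_geodesicHalfPlane]
  norm_num [holedTorusMatrix] at hz ⊢
  linarith [normSq_sub_mul_re_add_sq_pos z 4]

theorem mem_holedTorusSide_of_true_smul_false_smul_mem {z : ℍ}
    (hz : holedTorusMatrix true • holedTorusMatrix false • z ∈ holedTorusBoundary) :
    z ∈ holedTorusSide (true, false) := by
  rw [holedTorusBoundary, smul_mem_geodesicHalfPlane_iff _ rfl rfl rfl rfl,
    smul_mem_geodesicHalfPlane_iff _ rfl rfl rfl rfl, mem_geodesicHalfPlane] at hz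
  rw [holedTorusSide, mem_geodesicHalfPlane]
  norm_num [holedTorusMatrix] at hz ⊢
  linarith [normSq_sub_mul_re_add_sq_pos z 3]

theorem holedTorusTranslate_smul_mem (t : Bool × Bool) {z : ℍ} (hz : z ∈ holedTorusBoundary) :
    holedTorusRep (holedTorusTranslate t) • z ∈ holedTorusSide t := by
  have hside : z ∈ holedTorusSide (true, true) := by
    rw [holedTorusBoundary, mem_geodesicHalfPlane] at hz
    rw [holedTorusSide, mem_geodesicHalfPlane]
    linarith
  rcases t with ⟨_ | _, _ | _⟩
  · exact isPingPong_holedTorusRep.smul_mem (false, false) z fun h => by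
      simpa using isPingPong_holedTorusRep.eq_of_mem _ _ _ h hside
  · apply mem_holedTorusSide_of_true_smul_mem
    simpa [holedTorusTranslate, holedTorusRep] using hz
  · apply mem_holedTorusSide_of_true_smul_false_smul_mem
    simpa [holedTorusTranslate, holedTorusRep, mul_smul] using hz
  · simpa [holedTorusTranslate] using hside

theorem isPeripheral_holedTorusRep :
    IsPeripheral holedTorusRep holedTorusSide holedTorusBoundary
      (.zpowers boundaryLoop) holedTorusTranslate where
  smul_mem := by
    have hle : Subgroup.zpowers boundaryLoop ≤
        (MulAction.stabilizer SL(2, ℚ) holedTorusBoundary).comap holedTorusRep :=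
      Subgroup.zpowers_le.2 (MulAction.mem_stabilizer_set.2 holedTorusRep_boundaryLoop_smul_mem_iff)
    exact fun c hc x hx => (MulAction.mem_stabilizer_set.1 (hle hc) x).2 hx
  smul_mem_of_mem t _ := holedTorusTranslate_smul_mem t
  exists_mem := by
    have hof (i : Bool) : FreeGroup.mk [(i, true)] = FreeGroup.of i := rfl
    have hinv (i : Bool) : FreeGroup.mk [(i, false)] = (FreeGroup.of i)⁻¹ := rfl
    rintro ⟨_ | _, _ | _⟩
    · exact ⟨(true, true), by simp [holedTorusTranslate, hinv]⟩
    · exact ⟨(true, false), by simp [holedTorusTranslate, hof]⟩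
    · refine ⟨(false, false), ?_⟩
      convert Subgroup.mem_zpowers _ using 1
      simp [holedTorusTranslate, boundaryLoop, commutatorElement_def, hinv, mul_assoc]
    · exact ⟨(false, true), by simp [holedTorusTranslate, hof]⟩

end HoledTorus

namespace SurfaceGroup

variable {g : ℕ}

/-- The generator `aᵢ₊₁` of the surface group (indexed from `0`). -/
def a (i : Fin g) : SurfaceGroup g := PresentedGroup.of (Sum.inl i)

/-- The generator `bᵢ₊₁` of the surface group (indexed from `0`). -/
def b (i : Fin g) : SurfaceGroup g := PresentedGroup.of (Sum.inr i)

theorem prod_commutator_eq_one : (List.ofFn fun i : Fin g => ⁅a i, b i⁆).prod = 1 := by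
  rw [← PresentedGroup.one_of_mem (Set.mem_singleton (surfaceRelator g))]
  refine ((map_list_prod _ _).trans ?_).symm
  rw [List.map_ofFn]
  rfl

theorem closure_range_a_union_range_b :
    Subgroup.closure (Set.range (a : Fin g → _) ∪ Set.range b) = ⊤ := by
  rw [← Set.Sum.elim_range, ← PresentedGroup.closure_range_of]
  congr 2
  exact Sum.elim_comp_inl_inr _

variable {G : Type*} [Group G]

/-- The homomorphism out of the surface group that sends the generators `aᵢ` and `bᵢ` to `xᵢ` and
`yᵢ`. -/
def lift (x y : Fin g → G) (h : (List.ofFn fun i => ⁅x i, y i⁆).prod = 1) : SurfaceGroup g →* G :=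
  PresentedGroup.toGroup (f := Sum.elim x y) <| by
    rintro _ rfl
    rw [surfaceRelator, map_list_prod, List.map_ofFn, ← h]
    simp [Function.comp_def, commutatorElement_def]

variable (x y : Fin g → G) (h : (List.ofFn fun i => ⁅x i, y i⁆).prod = 1)

@[simp]
theorem lift_a (i : Fin g) : lift x y h (a i) = x i := PresentedGroup.toGroup.of _

@[simp]
theorem lift_b (i : Fin g) : lift x y h (b i) = y i := PresentedGroup.toGroup.of _

/-- The map to `Σ_g` of the fundamental group of its `i`-th handle, a one-holed torus. -/
def handle (i : Fin g) : FreeGroup Bool →* SurfaceGroup g :=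
  FreeGroup.lift fun t => cond t (b i) (a i)

theorem handle_boundaryLoop (i : Fin g) : handle i boundaryLoop = ⁅a i, b i⁆ := by
  simp [handle, boundaryLoop, map_commutatorElement]

theorem handle_boundaryLoop_mul : handle (0 : Fin 2) boundaryLoop * handle 1 boundaryLoop = 1 := by
  simpa [handle_boundaryLoop] using prod_commutator_eq_one (g := 2)

theorem range_handle_sup_range_handle :
    (handle (0 : Fin 2)).range ⊔ (handle (1 : Fin 2)).range = ⊤ := by
  rw [eq_top_iff, ← closure_range_a_union_range_b, Subgroup.closure_le]
  rintro _ (⟨i, rfl⟩ | ⟨i, rfl⟩) <;> fin_cases i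
  · exact Subgroup.mem_sup_left ⟨.of false, FreeGroup.lift_apply_of⟩
  · exact Subgroup.mem_sup_right ⟨.of false, FreeGroup.lift_apply_of⟩
  · exact Subgroup.mem_sup_left ⟨.of true, FreeGroup.lift_apply_of⟩
  · exact Subgroup.mem_sup_right ⟨.of true, FreeGroup.lift_apply_of⟩

theorem handle_zero_mem_range_handle_one {w : FreeGroup Bool}
    (hw : w ∈ Subgroup.zpowers boundaryLoop) :
    handle (0 : Fin 2) w ∈ (handle (1 : Fin 2)).range := by
  have hle : Subgroup.zpowers boundaryLoop ≤ (handle (1 : Fin 2)).range.comap (handle 0) := by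
    rw [Subgroup.zpowers_le, Subgroup.mem_comap, eq_inv_of_mul_eq_one_left handle_boundaryLoop_mul]
    exact inv_mem ⟨_, rfl⟩
  exact hle hw

theorem handle_one_mem_range_handle_zero {w : FreeGroup Bool}
    (hw : w ∈ Subgroup.zpowers boundaryLoop) :
    handle (1 : Fin 2) w ∈ (handle (0 : Fin 2)).range := by
  have hle : Subgroup.zpowers boundaryLoop ≤ (handle (0 : Fin 2)).range.comap (handle 1) := by
    rw [Subgroup.zpowers_le, Subgroup.mem_comap, eq_inv_of_mul_eq_one_right handle_boundaryLoop_mul]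
    exact inv_mem ⟨_, rfl⟩
  exact hle hw

end SurfaceGroup

section GenusTwo

open Matrix SurfaceGroup

theorem mem_zpowers_of_holedTorusRep_smul_mem {w : FreeGroup Bool} {z : ℍ}
    (hz : z ∈ holedTorusBoundary) (hwz : holedTorusRep w • z ∈ holedTorusBoundary) :
    w ∈ Subgroup.zpowers boundaryLoop := by
  simpa [holedTorusTranslate] using isPeripheral_holedTorusRep.mem_of_smul_eq_smul
    isPingPong_holedTorusRep (w := w) (i := (true, true)) (j := (true, true)) hz hwz
    (by simp [holedTorusTranslate])

theorem holedTorusRep_smul_notMem {z : ℍ} (hz : ∀ t, z ∉ holedTorusSide t) (w : FreeGroup Bool) :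
    holedTorusRep w • z ∉ holedTorusBoundary := fun hwz =>
  isPeripheral_holedTorusRep.smul_ne_smul isPingPong_holedTorusRep hz w (true, true) hwz
    (by simp [holedTorusTranslate])

/-- The half-turn `z ↦ -1 / z` about `i`, which exchanges the two sides of the imaginary axis. -/
def halfTurn : SL(2, ℚ) := ⟨!![0, -1; 1, 0], by norm_num [Matrix.det_fin_two_of]⟩

theorem halfTurn_smul_mem {z : ℍ} (hz : z ∉ holedTorusBoundary) :
    halfTurn • z ∈ holedTorusBoundary := by
  rw [holedTorusBoundary, smul_mem_geodesicHalfPlane_iff _ rfl rfl rfl rfl]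
  simpa [mem_geodesicHalfPlane, halfTurn] using (not_le.1 (mem_geodesicHalfPlane.not.1 hz)).le

theorem halfTurn_inv_smul_mem {z : ℍ} (hz : z ∉ holedTorusBoundary) :
    halfTurn⁻¹ • z ∈ holedTorusBoundary := by
  rw [holedTorusBoundary, smul_mem_geodesicHalfPlane_iff _ rfl rfl rfl rfl,
    Matrix.SpecialLinearGroup.coe_inv, adjugate_fin_two]
  simpa [mem_geodesicHalfPlane, halfTurn] using (not_le.1 (mem_geodesicHalfPlane.not.1 hz)).le

theorem conj_halfTurn_holedTorusRep_boundaryLoop :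
    MulAut.conj halfTurn (holedTorusRep boundaryLoop) = (holedTorusRep boundaryLoop)⁻¹ := by
  refine Subtype.ext ?_
  rw [MulAut.conj_apply, Matrix.SpecialLinearGroup.coe_mul, Matrix.SpecialLinearGroup.coe_mul,
    Matrix.SpecialLinearGroup.coe_inv, Matrix.SpecialLinearGroup.coe_inv,
    holedTorusRep_boundaryLoop, adjugate_fin_two, adjugate_fin_two]
  ext i j
  fin_cases i <;> fin_cases j <;> norm_num [halfTurn, mul_apply, vecMul_diagonal]

/-- The holonomy representation of the genus-two surface obtained by gluing the one-holed torus of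
`holedTorusRep` to its image under `halfTurn` along their boundaries. -/
def genusTwoRep : SurfaceGroup 2 →* SL(2, ℚ) :=
  SurfaceGroup.lift
    ![holedTorusMatrix false, MulAut.conj halfTurn (holedTorusMatrix false)]
    ![holedTorusMatrix true, MulAut.conj halfTurn (holedTorusMatrix true)] <| by
    have hloop : ⁅holedTorusMatrix false, holedTorusMatrix true⁆ = holedTorusRep boundaryLoop := by
      simp [holedTorusRep, boundaryLoop, map_commutatorElement]
    simp [-MulAut.conj_apply, ← map_commutatorElement, hloop,
      conj_halfTurn_holedTorusRep_boundaryLoop]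

theorem genusTwoRep_comp_handle_zero :
    genusTwoRep.comp (handle 0) = holedTorusRep := by
  ext1 i
  cases i <;> simp [handle, genusTwoRep, holedTorusRep]

theorem genusTwoRep_comp_handle_one :
    genusTwoRep.comp (handle 1) = (MulAut.conj halfTurn).toMonoidHom.comp holedTorusRep := by
  ext1 i
  cases i <;> simp [handle, genusTwoRep, holedTorusRep]

theorem genusTwoRep_handle_zero (w : FreeGroup Bool) :
    genusTwoRep (handle 0 w) = holedTorusRep w :=
  DFunLike.congr_fun genusTwoRep_comp_handle_zero w

theorem genusTwoRep_handle_one (w : FreeGroup Bool) :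
    genusTwoRep (handle 1 w) = halfTurn * holedTorusRep w * halfTurn⁻¹ :=
  DFunLike.congr_fun genusTwoRep_comp_handle_one w

theorem genusTwoRep_handle_one_boundaryLoop :
    genusTwoRep (handle 1 boundaryLoop) = (holedTorusRep boundaryLoop)⁻¹ := by
  rw [eq_inv_of_mul_eq_one_right handle_boundaryLoop_mul, map_inv, genusTwoRep_handle_zero]

theorem eq_one_of_genusTwoRep_smul_notMem {γ : SurfaceGroup 2} {z : ℍ}
    (hz : ∀ t, z ∉ holedTorusSide t) (hγz : ∀ t, genusTwoRep γ • z ∉ holedTorusSide t) :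
    γ = 1 := by
  let _ := MulAction.compHom ℍ genusTwoRep
  obtain ⟨w, rfl⟩ : γ ∈ (handle (0 : Fin 2)).range := by
    refine mem_left_of_smul_mem_of_pingPong range_handle_sup_range_handle (L := holedTorusBoundary)
      (T := {z | ∀ t, z ∉ holedTorusSide t}) ?_ ?_ ?_ hz hγz
    · rintro _ ⟨w, rfl⟩ hw x hx hwx
      change genusTwoRep _ • x ∈ _ at hwx
      rw [genusTwoRep_handle_zero] at hwx
      exact hw (handle_zero_mem_range_handle_one (mem_zpowers_of_holedTorusRep_smul_mem hx hwx))
    · rintro _ ⟨w, rfl⟩ hw x hx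
      change genusTwoRep _ • x ∈ _
      rw [genusTwoRep_handle_one, mul_smul, mul_smul]
      refine halfTurn_smul_mem fun hwx => hw (handle_one_mem_range_handle_zero
        (mem_zpowers_of_holedTorusRep_smul_mem (halfTurn_inv_smul_mem hx) hwx))
    · rintro _ ⟨w, rfl⟩ x hx
      change genusTwoRep _ • x ∉ _
      rw [genusTwoRep_handle_zero]
      exact holedTorusRep_smul_notMem hx w
  rw [genusTwoRep_handle_zero] at hγz
  by_contra hw
  have hw : w ≠ 1 := fun h => hw (h ▸ map_one _)
  obtain ⟨t, ht⟩ := isPingPong_holedTorusRep.exists_smul_mem hw hz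
  exact hγz t ht

theorem notMem_holedTorusSide (t : Bool × Bool) :
    (⟨3 + Complex.I, by simp⟩ : ℍ) ∉ holedTorusSide t := by
  rcases t with ⟨_ | _, _ | _⟩ <;>
    norm_num [holedTorusSide, mem_geodesicHalfPlane, Complex.normSq_apply, UpperHalfPlane.re]

theorem exists_eventually_eq_one_of_genusTwoRep_smul_eq :
    ∃ z : ℍ, ∀ᶠ w in 𝓝 z, ∀ γ, genusTwoRep γ • z = w → γ = 1 := by
  refine ⟨⟨3 + Complex.I, by simp⟩, ?_⟩
  filter_upwards [eventually_all.2 fun t =>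
    (isClosed_holedTorusSide t).isOpen_compl.mem_nhds (notMem_holedTorusSide t)] with w hw γ hγ
  exact eq_one_of_genusTwoRep_smul_notMem notMem_holedTorusSide (hγ ▸ hw)

end GenusTwo

section Covering

open SurfaceGroup

theorem prod_ofFn_conj_commutator {G : Type*} [Group G] (x y : G) (n : ℕ) :
    (List.ofFn fun k : Fin n => MulAut.conj (x ^ (k : ℕ)) ⁅y, x⁆).prod = ⁅y, x ^ n⁆ := by
  induction n with
  | zero => simp
  | succ n ih =>
    rw [List.ofFn_succ', List.prod_concat]
    simp only [Fin.val_castSucc, ih, Fin.val_last]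
    simp only [MulAut.conj_apply, commutatorElement_def, pow_succ]
    group

theorem commutator_a_one_b_one :
    ⁅a (1 : Fin 2), b (1 : Fin 2)⁆ = ⁅b (0 : Fin 2), a (0 : Fin 2)⁆ := by
  rw [← commutatorElement_inv (a 0), eq_inv_iff_mul_eq_one, mul_eq_one_comm]
  simpa using prod_commutator_eq_one (g := 2)

/-- The homomorphism induced by the `(m + 1)`-fold cyclic cover of the genus-two surface by the
surface of genus `m + 2` that unwraps the first handle along `a₁`: the second handle has `m + 1`
lifts, whose images are conjugate under powers of `a₁`. -/
def coveringHom (m : ℕ) : SurfaceGroup (m + 2) →* SurfaceGroup 2 :=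
  SurfaceGroup.lift
    (Fin.cons (a 0 ^ (m + 1)) fun k : Fin (m + 1) => MulAut.conj (a 0 ^ (k : ℕ)) (a 1))
    (Fin.cons (b 0) fun k : Fin (m + 1) => MulAut.conj (a 0 ^ (k : ℕ)) (b 1)) <| by
    rw [List.ofFn_succ, List.prod_cons]
    simp only [Fin.cons_zero, Fin.cons_succ, ← map_commutatorElement, commutator_a_one_b_one,
      prod_ofFn_conj_commutator]
    rw [← commutatorElement_inv, inv_mul_cancel]

theorem coveringHom_handle_one (m : ℕ) (w : FreeGroup Bool) :
    coveringHom m (handle 1 w) = handle 1 w := by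
  have hcomp : (coveringHom m).comp (handle 1) = handle 1 := by
    ext1 i
    cases i <;> simp [coveringHom, handle, ← Fin.succ_zero_eq_one, -Fin.succ_zero_eq_one']
  exact DFunLike.congr_fun hcomp w

theorem coveringHom_b_zero (m : ℕ) : coveringHom m (b 0) = handle 0 (.of true) := by
  simp [coveringHom, handle]

/-- Left multiplication by `u i` on the copy of `S` over `i`. With `rotateMul` it describes the
coset action of the group of a cyclic cover. -/
def fiberMul (ι S : Type*) [Group S] : (ι → S) →* Equiv.Perm (ι × S) where
  toFun u := .prodShear (.refl ι) fun i => .mulLeft (u i)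
  map_one' := by ext x <;> simp
  map_mul' u v := by ext x <;> simp

@[simp]
theorem fiberMul_apply {ι S : Type*} [Group S] (u : ι → S) (x : ι × S) :
    fiberMul ι S u x = (x.1, u x.1 * x.2) := rfl

/-- The rotation `k ↦ k + 1` of the sheets of a cyclic cover of degree `m + 1` on
`Fin (m + 1) × S`, with holonomy `s` when passing from the last sheet to the first. -/
def rotateMul {S : Type*} [Group S] (m : ℕ) (s : S) : Equiv.Perm (Fin (m + 1) × S) :=
  .prodShear (finRotate (m + 1)) fun k =>
    .mulLeft (Pi.mulSingle (M := fun _ => S) (Fin.last m) s k)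

theorem rotateMul_apply {S : Type*} [Group S] (m : ℕ) (s : S) (x : Fin (m + 1) × S) :
    rotateMul m s x =
      (finRotate (m + 1) x.1, Pi.mulSingle (M := fun _ => S) (Fin.last m) s x.1 * x.2) := rfl

theorem rotateMul_castSucc {S : Type*} [Group S] {m : ℕ} (s : S) (k : Fin m) (t : S) :
    rotateMul m s (k.castSucc, t) = (k.succ, t) := by
  simp [rotateMul_apply, k.castSucc_lt_last.ne]

theorem rotateMul_last {S : Type*} [Group S] (m : ℕ) (s t : S) :
    rotateMul m s (Fin.last m, t) = (0, s * t) := by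
  simp [rotateMul_apply]

theorem rotateMul_pow_apply {S : Type*} [Group S] {m : ℕ} (s : S) (k : Fin (m + 1)) (t : S) :
    (rotateMul m s ^ (k : ℕ)) (0, t) = (k, t) := by
  induction k using Fin.induction with
  | zero => rfl
  | succ k ih =>
    rw [Fin.val_succ, pow_succ', Equiv.Perm.mul_apply, ← Fin.val_castSucc, ih, rotateMul_castSucc]

theorem commutator_inv_rotateMul_fiberMul {S : Type*} [Group S] {m : ℕ} {u c : Fin (m + 1) → S}
    {s : S} (hsucc : ∀ k : Fin m, u k.succ = (c k.castSucc)⁻¹ * u k.castSucc)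
    (hlast : u 0 * s = s * ((c (Fin.last m))⁻¹ * u (Fin.last m))) :
    ⁅(rotateMul m s)⁻¹, fiberMul _ S u⁆ = (fiberMul _ S c)⁻¹ := by
  rw [commutatorElement_def, inv_inv, mul_inv_eq_iff_eq_mul, mul_assoc, inv_mul_eq_iff_eq_mul,
    ← map_inv]
  ext1 ⟨k, t⟩
  simp only [Equiv.Perm.mul_apply, fiberMul_apply, Pi.inv_apply]
  cases k using Fin.lastCases with
  | last => simp only [rotateMul_last, ← mul_assoc, hlast]
  | cast k => simp only [rotateMul_castSucc, ← mul_assoc, hsucc]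

/-- The holonomy of the curve `b₁` on the `k`-th sheet of the cyclic cover: `b₁` pushed across the
first `k` lifts of the second handle. -/
def monodromyTwist (m : ℕ) (k : Fin (m + 2)) : SurfaceGroup (m + 2) :=
  (Fin.partialProd (fun k : Fin (m + 1) => ⁅a k.succ, b k.succ⁆) k)⁻¹ * b 0

theorem monodromyTwist_zero (m : ℕ) : monodromyTwist m 0 = b 0 := by
  simp [monodromyTwist]

theorem monodromyTwist_succ {m : ℕ} (k : Fin (m + 1)) :
    monodromyTwist m k.succ = ⁅a k.succ, b k.succ⁆⁻¹ * monodromyTwist m k.castSucc := by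
  simp only [monodromyTwist, Fin.partialProd_succ, mul_inv_rev, mul_assoc]

theorem monodromyTwist_last (m : ℕ) :
    monodromyTwist m (Fin.last (m + 1)) = a 0 * b 0 * (a 0)⁻¹ := by
  have h := prod_commutator_eq_one (g := m + 2)
  rw [List.ofFn_succ, List.prod_cons] at h
  have hprod : Fin.partialProd (fun k : Fin (m + 1) => ⁅a k.succ, b k.succ⁆) (Fin.last (m + 1)) =
      ⁅a (0 : Fin (m + 2)), b 0⁆⁻¹ := by
    rw [eq_inv_iff_mul_eq_one, mul_eq_one_comm, ← h]
    rw [Fin.partialProd, Fin.val_last, List.take_of_length_le (by simp)]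
  rw [monodromyTwist, hprod, inv_inv, commutatorElement_def, inv_mul_cancel_right]

theorem commutator_inv_rotateMul_mul_commutator_fiberMul (m : ℕ) :
    ⁅(rotateMul m (a (0 : Fin (m + 2)))⁻¹)⁻¹,
        fiberMul _ _ fun k : Fin (m + 1) => monodromyTwist m k.castSucc⁆ *
      ⁅fiberMul _ _ fun k : Fin (m + 1) => a k.succ,
        fiberMul _ _ fun k : Fin (m + 1) => b k.succ⁆ = 1 := by
  have hlast : b 0 * (a 0)⁻¹ = (a 0)⁻¹ * (⁅a (Fin.last m).succ, b (Fin.last m).succ⁆⁻¹ *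
      monodromyTwist m (Fin.last m).castSucc) := by
    rw [← monodromyTwist_succ, Fin.succ_last, monodromyTwist_last]
    group
  rw [← map_commutatorElement, mul_eq_one_iff_eq_inv]
  exact commutator_inv_rotateMul_fiberMul (fun k => monodromyTwist_succ k.castSucc)
    (by rwa [← monodromyTwist_zero] at hlast)

/-- The permutation representation of the genus-two group induced from left multiplication of the
surface group of genus `m + 2` on itself, written in terms of the sheets of the cyclic cover.
Through `coveringHom`, the latter group acts on the sheet `0` by left multiplication, hence
faithfully. -/
def monodromy (m : ℕ) : SurfaceGroup 2 →* Equiv.Perm (Fin (m + 1) × SurfaceGroup (m + 2)) :=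
  SurfaceGroup.lift
    ![(rotateMul m (a 0)⁻¹)⁻¹, fiberMul _ _ fun k => a k.succ]
    ![fiberMul _ _ fun k => monodromyTwist m k.castSucc, fiberMul _ _ fun k => b k.succ] <| by
    simpa using commutator_inv_rotateMul_mul_commutator_fiberMul m

theorem injective_of_equivariant {S H Y : Type*} [Group S] [Group H] {s : Set S}
    (hs : Subgroup.closure s = ⊤) {θ : S →* H} (Φ : H →* Equiv.Perm Y) {ι : S → Y}
    (hι : Function.Injective ι) (h : ∀ x ∈ s, ∀ t, Φ (θ x) (ι t) = ι (x * t)) :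
    Function.Injective θ := by
  have hall (x : S) : ∀ t, Φ (θ x) (ι t) = ι (x * t) := by
    have hx : x ∈ Subgroup.closure s := hs ▸ Subgroup.mem_top x
    induction hx using Subgroup.closure_induction with
    | mem x hx => exact h x hx
    | one => simp
    | mul x y _ _ hx hy => simp [hx, hy, mul_assoc]
    | inv x _ hx =>
      intro t
      rw [map_inv, map_inv, Equiv.Perm.inv_eq_iff_eq, hx, mul_inv_cancel_left]
  refine (injective_iff_map_eq_one θ).2 fun x hx => hι ?_
  simpa [hx] using (hall x 1).symm

theorem conj_inv_rotateMul_pow_fiberMul_apply {S : Type*} [Group S] {m : ℕ} (s : S)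
    (u : Fin (m + 1) → S) (k : Fin (m + 1)) (t : S) :
    MulAut.conj ((rotateMul m s)⁻¹ ^ (k : ℕ)) (fiberMul _ S u) (0, t) = (0, u k * t) := by
  rw [MulAut.conj_apply, inv_pow, inv_inv, Equiv.Perm.mul_apply, Equiv.Perm.mul_apply,
    rotateMul_pow_apply, Equiv.Perm.inv_eq_iff_eq, rotateMul_pow_apply, fiberMul_apply]

theorem inv_rotateMul_pow_succ_apply {S : Type*} [Group S] (m : ℕ) (s t : S) :
    ((rotateMul m s)⁻¹ ^ (m + 1)) (0, t) = (0, s⁻¹ * t) := by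
  have h := rotateMul_pow_apply s (Fin.last m) (s⁻¹ * t)
  rw [Fin.val_last] at h
  rw [inv_pow, Equiv.Perm.inv_eq_iff_eq, pow_succ', Equiv.Perm.mul_apply, h, rotateMul_last,
    mul_inv_cancel_left]

theorem monodromy_conj_pow (m k : ℕ) (x : SurfaceGroup 2) :
    monodromy m (MulAut.conj (a 0 ^ k) x) =
      MulAut.conj ((rotateMul m (a 0)⁻¹)⁻¹ ^ k) (monodromy m x) := by
  have ha : monodromy m (a 0) = (rotateMul m (a 0)⁻¹)⁻¹ := lift_a _ _ _ _
  rw [MulAut.conj_apply, MulAut.conj_apply, map_mul, map_mul, map_inv, map_pow, ha]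

theorem injective_coveringHom (m : ℕ) : Function.Injective (coveringHom m) := by
  refine injective_of_equivariant closure_range_a_union_range_b (monodromy m)
    (ι := fun t => (0, t)) (Prod.mk_right_injective 0) ?_
  rintro _ (⟨i, rfl⟩ | ⟨i, rfl⟩) t <;> cases i using Fin.cases <;>
    simp only [coveringHom, lift_a, lift_b, Fin.cons_zero, Fin.cons_succ, monodromy_conj_pow]
  · rw [map_pow, monodromy, lift_a, Matrix.cons_val_zero, inv_rotateMul_pow_succ_apply, inv_inv]
  · rw [monodromy, lift_a, Matrix.cons_val_one, Matrix.cons_val_zero,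
      conj_inv_rotateMul_pow_fiberMul_apply]
  · simp [monodromy, monodromyTwist_zero]
  · rw [monodromy, lift_b, Matrix.cons_val_one, Matrix.cons_val_zero,
      conj_inv_rotateMul_pow_fiberMul_apply]

end Covering

section RationalRep

open Matrix SurfaceGroup

theorem eq_bot_or_eq_top_of_symPow_holedTorusRep_mulVec_mem {d : ℕ}
    {W : Submodule ℝ (Fin (d + 1) → ℝ)}
    (hloop : ∀ w ∈ W,
      symPow d ((holedTorusRep boundaryLoop).1.map (algebraMap ℚ ℝ)) *ᵥ w ∈ W)
    (htrue : ∀ w ∈ W,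
      symPow d ((holedTorusRep (.of true)).1.map (algebraMap ℚ ℝ)) *ᵥ w ∈ W) :
    W = ⊥ ∨ W = ⊤ := by
  have hdiag : (diagonal ![-4, -1 / 4] : Matrix _ _ ℚ).map (algebraMap ℚ ℝ) =
      diagonal ![-4, -1 / 4] := by
    ext i j
    fin_cases i <;> fin_cases j <;> norm_num
  have hpow : Function.Injective fun k : ℕ => (-4 / (-1 / 4) : ℝ) ^ k :=
    pow_right_injective₀ (by norm_num) (by norm_num)
  rw [holedTorusRep_boundaryLoop, hdiag] at hloop
  refine eq_bot_or_eq_top_of_symPow_mulVec_mem d (by norm_num) hpow hloop htrue ?_ ?_ ?_ <;>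
  simp [holedTorusRep, holedTorusMatrix]

theorem exists_rational_rep_extending_holedTorusRep {g : ℕ} (hg : 2 ≤ g) :
    ∃ ρ : SurfaceGroup g →* SL(2, ℚ),
      (∃ z : ℍ, ∀ᶠ w in 𝓝 z, ∀ γ, ρ γ • z = w → γ = 1) ∧
      (∃ γ, ρ γ = holedTorusRep boundaryLoop) ∧ ∃ γ, ρ γ = holedTorusRep (.of true) := by
  obtain ⟨m, rfl⟩ := Nat.exists_eq_add_of_le' hg
  obtain ⟨z, hz⟩ := exists_eventually_eq_one_of_genusTwoRep_smul_eq
  refine ⟨genusTwoRep.comp (coveringHom m), ⟨z, ?_⟩, ⟨(handle 1 boundaryLoop)⁻¹, ?_⟩, b 0, ?_⟩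
  · filter_upwards [hz] with w hw γ hγ
    exact (injective_iff_map_eq_one _).1 (injective_coveringHom m) γ (hw _ hγ)
  · rw [map_inv, MonoidHom.comp_apply, coveringHom_handle_one,
      genusTwoRep_handle_one_boundaryLoop, inv_inv]
  · rw [MonoidHom.comp_apply, coveringHom_b_zero, genusTwoRep_handle_zero]

end RationalRep

/-- For every `n ≥ 2` and `g ≥ 2` there is a discrete, faithful, irreducible representation
of the genus-`g` surface group into `SL(n,ℝ)` with all matrix entries rational. -/
theorem exists_discrete_faithful_irreducible_rational_rep (n : ℕ) (hn : 2 ≤ n)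
    (g : ℕ) (hg : 2 ≤ g) :
    ∃ ρ : SurfaceGroup g →* Matrix.SpecialLinearGroup (Fin n) ℝ,
      Function.Injective ρ ∧
      (∀ x : SurfaceGroup g, ∀ i j,
        ((ρ x : Matrix.SpecialLinearGroup (Fin n) ℝ) : Matrix (Fin n) (Fin n) ℝ) i j ∈
          Set.range ((↑) : ℚ → ℝ)) ∧
      DiscreteTopology ↥ρ.range ∧
      (∀ W : Submodule ℝ (Fin n → ℝ),
        (∀ x : SurfaceGroup g, ∀ w ∈ W,
          ((ρ x : Matrix.SpecialLinearGroup (Fin n) ℝ) : Matrix (Fin n) (Fin n) ℝ).mulVec w ∈ W)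
        → W = ⊥ ∨ W = ⊤) := by
  obtain ⟨d, rfl⟩ := Nat.exists_eq_add_of_lt hn
  obtain ⟨ρ, ⟨z, hz⟩, ⟨δ, hδ⟩, β, hβ⟩ := exists_rational_rep_extending_holedTorusRep hg
  let σ := (symPowSL (1 + d)).comp ((Matrix.SpecialLinearGroup.map (algebraMap ℚ ℝ)).comp ρ)
  have hσ (γ : SurfaceGroup g) (i j : Fin (1 + d + 1)) :
      ((symPowSL (1 + d) (ρ γ) i j : ℚ) : ℝ) = σ γ i j :=
    congr_arg (fun M : SL(1 + d + 1, ℝ) => M i j) (map_symPowSL (algebraMap ℚ ℝ) (1 + d) (ρ γ))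
  have hone : ∀ᶠ γ in comap σ (𝓝 1), γ = 1 :=
    eventually_eq_one_of_eventually_smul_eq (by positivity) hz
  have : IsTopologicalGroup SL(1 + d + 1, ℝ) :=
    Matrix.SpecialLinearGroup.topologicalGroup
  exact ⟨σ, injective_of_eventually_eq_one hone, fun γ i j => ⟨_, hσ γ i j⟩,
    discreteTopology_range_of_eventually_eq_one hone, fun W hW =>
      eq_bot_or_eq_top_of_symPow_holedTorusRep_mulVec_mem (hδ ▸ hW δ) (hβ ▸ hW β)⟩
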